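/- arXiv:1601.04856 — 2 statements merged into one kernel-verified Lean document; each statement's English description precedes it below -/
import Mathlib

section
/- For every hypergraph H that has at least one edge, the game transversal number satisfies τ(H) ≤ τ_g(H) ≤ 2τ(H) − 1. -/
variable {V : Type} [Fintype V] [DecidableEq V]

/-- The set of legal moves in the transversal game with uncovered edge set `E`:
the vertices hitting at least one uncovered edge. -/
def playable (E : Finset (Finset V)) : Finset V :=
  Finset.univ.filter (fun v => ∃ e ∈ E, v ∈ e)

/-- The number of moves remaining in the transversal game with uncovered edge set `E`
under optimal play, where `ehTurn = true` iff Edge-hitter (the minimizer) moves next;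
Staller (the maximizer) moves next iff `ehTurn = false`.  Each move must hit at least
one uncovered edge, and the game ends when no uncovered edge remains. -/
def gameVal (ehTurn : Bool) (E : Finset (Finset V)) : ℕ :=
  if h : (playable E).Nonempty then
    1 +
      (if ehTurn then
        (playable E).attach.inf' (Finset.attach_nonempty_iff.mpr h)
          (fun v => gameVal (!ehTurn) (E.filter (fun e => v.1 ∉ e)))
      else
        (playable E).attach.sup' (Finset.attach_nonempty_iff.mpr h)
          (fun v => gameVal (!ehTurn) (E.filter (fun e => v.1 ∉ e))))
  else 0
termination_by E.card
decreasing_by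
  all_goals
    obtain ⟨v, hv⟩ := v
    simp only [playable, Finset.mem_filter, Finset.mem_univ, true_and] at hv
    obtain ⟨e, he, hve⟩ := hv
    exact Finset.card_lt_card (Finset.filter_ssubset.mpr ⟨e, he, by simp [hve]⟩)

/-- The game transversal number `τ_g`: Edge-hitter makes the first move. -/
def gameTransversalNum (E : Finset (Finset V)) : ℕ := gameVal true E

/-- The Staller-start game transversal number `τ_g'`: Staller makes the first move. -/
def stallerGameTransversalNum (E : Finset (Finset V)) : ℕ := gameVal false E

/-- The transversal number `τ`: the minimum size of a set of vertices meeting all edges. -/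
noncomputable def transversalNum (E : Finset (Finset V)) : ℕ :=
  sInf {n | ∃ T : Finset V, (∀ e ∈ E, ∃ v ∈ T, v ∈ e) ∧ T.card = n}

/-!
The vertices chosen in any play form a transversal, so no play is shorter than `τ`.
Conversely, Edge-hitter fixes a minimum transversal `T` and always plays a vertex of `T` lying in an
unhit edge. Each such move leaves one vertex fewer of `T` needed, so Edge-hitter makes at most `τ`
moves, and Staller at most `τ - 1` in between.
-/

open Finset

/-- `T` is a transversal of the hypergraph with edge set `E`, i.e. `T` meets every edge. -/
def IsTransversal {α : Type*} (T : Finset α) (E : Finset (Finset α)) : Prop :=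
  ∀ e ∈ E, ∃ v ∈ T, v ∈ e

namespace IsTransversal

section Basic

variable {α : Type*} {T : Finset α} {E F : Finset (Finset α)}

theorem mono_right (hT : IsTransversal T F) (hEF : E ⊆ F) : IsTransversal T E :=
  fun e he => hT e (hEF he)

theorem insert_iff [DecidableEq α] {v : α} :
    IsTransversal (insert v T) E ↔ IsTransversal T (E.nonMemberSubfamily v) := by
  simp only [IsTransversal, exists_mem_insert, mem_nonMemberSubfamily, and_imp, or_iff_not_imp_left]

end Basic

section TransversalNum

variable {α : Type} {T : Finset α} {E : Finset (Finset α)}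

theorem transversalNum_le_card (hT : IsTransversal T E) : transversalNum E ≤ #T :=
  Nat.sInf_le ⟨T, hT, rfl⟩

theorem exists_card_eq_transversalNum (hT : IsTransversal T E) :
    ∃ S, IsTransversal S E ∧ #S = transversalNum E :=
  Nat.sInf_mem (s := {n | ∃ S, IsTransversal S E ∧ #S = n}) ⟨#T, T, hT, rfl⟩

end TransversalNum

end IsTransversal

section Game

variable {E : Finset (Finset V)} {T : Finset V} {v : V}

theorem mem_playable : v ∈ playable E ↔ ∃ e ∈ E, v ∈ e := by
  simp [playable]

theorem nonMemberSubfamily_ssubset_of_mem_playable (hv : v ∈ playable E) :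
    E.nonMemberSubfamily v ⊂ E := by
  obtain ⟨e, he, hve⟩ := mem_playable.mp hv
  exact filter_ssubset.mpr ⟨e, he, not_not_intro hve⟩

theorem gameVal_empty (ehTurn : Bool) : gameVal ehTurn (∅ : Finset (Finset V)) = 0 := by
  simp [gameVal, playable]

theorem gameVal_true_le (hv : v ∈ playable E) :
    gameVal true E ≤ 1 + gameVal false (E.nonMemberSubfamily v) := by
  rw [gameVal, dif_pos ⟨v, hv⟩, if_pos rfl]
  gcongr
  exact inf'_le (fun w : playable E => gameVal false (E.nonMemberSubfamily w.1))
    (mem_attach _ ⟨v, hv⟩)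

theorem exists_mem_playable_gameVal_eq (ehTurn : Bool) (h : (playable E).Nonempty) :
    ∃ v ∈ playable E, gameVal ehTurn E = 1 + gameVal (!ehTurn) (E.nonMemberSubfamily v) := by
  rw [gameVal, dif_pos h]
  let value (v : playable E) : ℕ := gameVal (!ehTurn) (E.nonMemberSubfamily v.1)
  cases ehTurn with
  | false =>
    obtain ⟨v, -, hv⟩ := exists_mem_eq_sup' (attach_nonempty_iff.mpr h) value
    exact ⟨v.1, v.2, congrArg (1 + ·) hv⟩
  | true =>
    obtain ⟨v, -, hv⟩ := exists_mem_eq_inf' (attach_nonempty_iff.mpr h) value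
    exact ⟨v.1, v.2, congrArg (1 + ·) hv⟩

theorem exists_isTransversal_card_le_gameVal (hE : ∀ e ∈ E, e.Nonempty) (ehTurn : Bool) :
    ∃ T, IsTransversal T E ∧ #T ≤ gameVal ehTurn E := by
  induction E using Finset.strongInduction generalizing ehTurn with
  | H E ih =>
    obtain rfl | ⟨e, he⟩ := E.eq_empty_or_nonempty
    · exact ⟨∅, by simp [IsTransversal], Nat.zero_le _⟩
    obtain ⟨u, hu⟩ := hE e he
    obtain ⟨v, hv, hval⟩ := exists_mem_playable_gameVal_eq ehTurn ⟨u, mem_playable.mpr ⟨e, he, hu⟩⟩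
    have hsub := nonMemberSubfamily_ssubset_of_mem_playable hv
    obtain ⟨T, hT, hcard⟩ := ih _ hsub (fun f hf => hE f (hsub.subset hf)) (!ehTurn)
    refine ⟨insert v T, IsTransversal.insert_iff.mpr hT, ?_⟩
    calc
      #(insert v T) ≤ #T + 1 := card_insert_le v T
      _ ≤ gameVal (!ehTurn) (E.nonMemberSubfamily v) + 1 := by gcongr
      _ = gameVal ehTurn E := by rw [hval, add_comm]

theorem IsTransversal.gameVal_true_le_and_gameVal_false_le (hT : IsTransversal T E) :
    gameVal true E ≤ 2 * #T - 1 ∧ gameVal false E ≤ 2 * #T := by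
  induction E using Finset.strongInduction generalizing T with
  | H E ih =>
    obtain rfl | ⟨e, he⟩ := E.eq_empty_or_nonempty
    · simp [gameVal_empty]
    obtain ⟨v, hvT, hve⟩ := hT e he
    have hv : v ∈ playable E := mem_playable.mpr ⟨e, he, hve⟩
    have hcard : #(T.erase v) + 1 = #T := card_erase_add_one hvT
    constructor
    · have hT' : IsTransversal (T.erase v) (E.nonMemberSubfamily v) := by
        rwa [← IsTransversal.insert_iff, insert_erase hvT]
      calc
        gameVal true E ≤ 1 + gameVal false (E.nonMemberSubfamily v) := gameVal_true_le hv
        _ ≤ 1 + 2 * #(T.erase v) := by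
          gcongr
          exact (ih _ (nonMemberSubfamily_ssubset_of_mem_playable hv) hT').2
        _ = 2 * #T - 1 := by lia
    · obtain ⟨w, hw, hval⟩ := exists_mem_playable_gameVal_eq false ⟨v, hv⟩
      have hsub := nonMemberSubfamily_ssubset_of_mem_playable hw
      calc
        gameVal false E = 1 + gameVal true (E.nonMemberSubfamily w) := hval
        _ ≤ 1 + (2 * #T - 1) := by
          gcongr
          exact (ih _ hsub (hT.mono_right hsub.subset)).1
        _ = 2 * #T := by lia

end Game

/-- For every hypergraph `H` with at least one edge, `τ(H) ≤ τ_g(H) ≤ 2τ(H) - 1`. -/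
theorem tau_le_gameTransversalNum_le_two_tau_sub_one
    {V : Type} [Fintype V] [DecidableEq V] (E : Finset (Finset V))
    (hedge : ∀ e ∈ E, e.Nonempty) (hE : E.Nonempty) :
    transversalNum E ≤ gameTransversalNum E ∧
      gameTransversalNum E ≤ 2 * transversalNum E - 1 := by
  obtain ⟨T, hT, hTgame⟩ := exists_isTransversal_card_le_gameVal hedge true
  obtain ⟨S, hS, hcard⟩ := hT.exists_card_eq_transversalNum
  exact ⟨hT.transversalNum_le_card.trans hTgame,
    hcard ▸ hS.gameVal_true_le_and_gameVal_false_le.1⟩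
end

section
/- If H is a 3-uniform hypergraph, then τ_g(H) ≤ (5/16)(n(H) + m(H)). -/
variable {V : Type} [Fintype V] [DecidableEq V]

/-!
Let `Φ(H)` be `15 m(H)` plus the sum of weights `11`, `14`, `15` for the vertices of degree `1`,
`2`, at least `3`. Since `Φ(H) ≤ 15 (n(H) + m(H))`, it is enough to show `48 τ_g(H) ≤ Φ(H)`, and for
this Edge-hitter wants every round (his move and the reply) to lower `Φ` by `96`.

He plays a vertex of degree at least `4`; failing that, a vertex of degree `3`, next to a vertex of
degree `1` if possible; failing that, a vertex of degree `2`, again next to a vertex of degree `1`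
if possible; failing that, any vertex that is left. A round may be too cheap (`88` instead of `96`)
only if the maximum degree is `2` and no edge contains vertices of degrees `1` and `2`. But then
`24 ∣ Φ(H)`, so the resulting bound `48 τ_g(H) ≤ Φ(H) + 8` is as good as `48 τ_g(H) ≤ Φ(H)`.
-/

namespace TransversalGame

open Finset

section Hypergraph

variable {α : Type*} [DecidableEq α] {E F : Finset (Finset α)} {e : Finset α} {u v : α}

/-- The edges of `E` hit by `v`. The number of common edges of `v` and `u` is
`degree (edgesAt E v) u`. -/
def edgesAt (E : Finset (Finset α)) (v : α) : Finset (Finset α) := {e ∈ E | v ∈ e}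

/-- The edges of `E` that are still uncovered after the move `v`. -/
def residual (E : Finset (Finset α)) (v : α) : Finset (Finset α) := {e ∈ E | v ∉ e}

/-- The degree of a vertex: the number of edges containing it. -/
def degree (E : Finset (Finset α)) (v : α) : ℕ := #(edgesAt E v)

theorem mem_edgesAt : e ∈ edgesAt E v ↔ e ∈ E ∧ v ∈ e := mem_filter

theorem edgesAt_subset (E : Finset (Finset α)) (v : α) : edgesAt E v ⊆ E := filter_subset _ _

theorem residual_subset (E : Finset (Finset α)) (v : α) : residual E v ⊆ E := filter_subset _ _

theorem degree_pos_iff : 0 < degree E v ↔ ∃ e ∈ E, v ∈ e := by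
  simp only [degree, card_pos, Finset.Nonempty, mem_edgesAt]

theorem degree_pos_of_mem (he : e ∈ E) (hv : v ∈ e) : 0 < degree E v :=
  degree_pos_iff.2 ⟨e, he, hv⟩

theorem degree_mono (h : F ⊆ E) (v : α) : degree F v ≤ degree E v :=
  card_le_card (filter_subset_filter _ h)

theorem residual_ssubset (hv : 0 < degree E v) : residual E v ⊂ E := by
  obtain ⟨e, he, hve⟩ := degree_pos_iff.1 hv
  exact filter_ssubset.2 ⟨e, he, not_not.2 hve⟩

theorem card_residual_add_degree (E : Finset (Finset α)) (v : α) :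
    #(residual E v) + degree E v = #E := by
  rw [add_comm]
  exact card_filter_add_card_filter_not (v ∈ ·)

theorem degree_residual_add_degree_edgesAt (E : Finset (Finset α)) (v u : α) :
    degree (residual E v) u + degree (edgesAt E v) u = degree E u := by
  have hres : edgesAt (residual E v) u = residual (edgesAt E u) v := filter_comm _ _ _
  have hat : edgesAt (edgesAt E v) u = edgesAt (edgesAt E u) v := filter_comm _ _ _
  rw [degree, degree, hres, hat]
  exact card_residual_add_degree (edgesAt E u) v

theorem degree_edgesAt_self (E : Finset (Finset α)) (v : α) :
    degree (edgesAt E v) v = degree E v := by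
  simp only [degree, edgesAt, filter_filter, and_self]

theorem degree_residual_self (E : Finset (Finset α)) (v : α) : degree (residual E v) v = 0 := by
  have := degree_residual_add_degree_edgesAt E v v
  rw [degree_edgesAt_self] at this
  omega

theorem ne_of_degree_residual_pos (hu : 0 < degree (residual E v) u) : u ≠ v := by
  rintro rfl
  exact hu.ne' (degree_residual_self E u)

theorem degree_filter_of_unmixed {p : α → Prop} [DecidablePred p]
    (hunmixed : ∀ e ∈ E, ∀ a ∈ e, p a → ∀ b ∈ e, p b) (u : α) :
    degree {e ∈ E | ∃ a ∈ e, p a} u = if p u then degree E u else 0 := by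
  split_ifs with hu
  · have hat : edgesAt {e ∈ E | ∃ a ∈ e, p a} u = edgesAt E u := by
      ext e
      simp only [mem_edgesAt, mem_filter]
      exact ⟨fun h => ⟨h.1.1, h.2⟩, fun h => ⟨⟨h.1, u, h.2, hu⟩, h.2⟩⟩
    rw [degree, hat, degree]
  · by_contra hpos
    obtain ⟨e, he, hue⟩ := degree_pos_iff.1 (Nat.pos_of_ne_zero hpos)
    obtain ⟨heE, a, ha, hpa⟩ := mem_filter.1 he
    exact hu (hunmixed e heE a ha hpa u hue)

theorem sized_residual {k : ℕ} (hE : (E : Set (Finset α)).Sized k) (v : α) :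
    (residual E v : Set (Finset α)).Sized k :=
  hE.mono (coe_subset.2 (residual_subset E v))

variable [Fintype α]

theorem sum_degree (E : Finset (Finset α)) : ∑ v, degree E v = ∑ e ∈ E, #e := by
  simpa [degree, edgesAt, bipartiteAbove, bipartiteBelow] using
    sum_card_bipartiteAbove_eq_sum_card_bipartiteBelow (s := univ) (t := E)
      (fun (v : α) (e : Finset α) => v ∈ e)

theorem sum_degree_of_sized {k : ℕ} (hE : (E : Set (Finset α)).Sized k) :
    ∑ v, degree E v = #E * k := by
  rw [sum_degree, sum_const_nat fun e he => hE (mem_coe.2 he)]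

theorem sum_erase_degree_edgesAt {k : ℕ} (hE : (E : Set (Finset α)).Sized (k + 1)) (v : α) :
    ∑ u ∈ univ.erase v, degree (edgesAt E v) u = degree E v * k := by
  have hsum : ∑ u, degree (edgesAt E v) u = degree E v * (k + 1) :=
    sum_degree_of_sized (hE.mono (coe_subset.2 (edgesAt_subset E v)))
  rw [← add_sum_erase univ _ (mem_univ v), degree_edgesAt_self, mul_add_one] at hsum
  omega

end Hypergraph

section Weight

/-- The contribution to `potential` of a vertex of the given degree. It is a concave function of the
degree with increments `11, 3, 1, 0, …`. -/
def weight : ℕ → ℕ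
  | 0 => 0
  | 1 => 11
  | 2 => 14
  | _ => 15

theorem weight_le (d : ℕ) : weight d ≤ 15 := by
  rcases d with _ | _ | _ | d <;> simp [weight]

theorem weight_of_three_le {d : ℕ} (hd : 3 ≤ d) : weight d = 15 := by
  rcases d with _ | _ | _ | d <;> simp [weight] at hd ⊢

theorem weight_mono : Monotone weight :=
  monotone_nat_of_le_succ fun d => by rcases d with _ | _ | _ | d <;> simp [weight]

theorem le_weight {d : ℕ} (hd : 0 < d) : 11 ≤ weight d := weight_mono hd

/-- Below degree `D`, every unit of degree is worth at least `c` units of weight. -/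
def WeightSlope (D c : ℕ) : Prop := ∀ d k, d + k ≤ D → weight d + c * k ≤ weight (d + k)

theorem weightSlope_zero (D : ℕ) : WeightSlope D 0 := fun d k _ => by
  simpa using weight_mono (Nat.le_add_right d k)

theorem weightSlope_of_step {D c : ℕ} (h : ∀ d < D, weight d + c ≤ weight (d + 1)) :
    WeightSlope D c := by
  intro d k hk
  induction k with
  | zero => simp
  | succ k ih =>
    have hstep := h (d + k) (by omega)
    have := ih (by omega)
    rw [mul_add_one, ← add_assoc d]
    omega

theorem weightSlope_one : WeightSlope 1 11 := weightSlope_of_step (by decide)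

theorem weightSlope_two : WeightSlope 2 3 := weightSlope_of_step (by decide)

theorem weightSlope_three : WeightSlope 3 1 := weightSlope_of_step (by decide)

end Weight

section Potential

variable {α : Type*} [DecidableEq α] {E : Finset (Finset α)} {v z : α} {D c x : ℕ}

theorem WeightSlope.weight_degree_residual_add_le (hc : WeightSlope D c)
    (hD : ∀ e ∈ edgesAt E v, ∀ u ∈ e, degree E u ≤ D) (u : α) :
    weight (degree (residual E v) u) + c * degree (edgesAt E v) u ≤ weight (degree E u) := by
  have hsplit := degree_residual_add_degree_edgesAt E v u
  rcases Nat.eq_zero_or_pos (degree (edgesAt E v) u) with hzero | hpos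
  · have hres : degree (residual E v) u = degree E u := by omega
    rw [hzero, hres, mul_zero, add_zero]
  · obtain ⟨e, he, hu⟩ := degree_pos_iff.1 hpos
    rw [← hsplit]
    exact hc _ _ (hsplit.trans_le (hD e he u hu))

variable [Fintype α]

/-- The potential `Φ` bounding the length of the game: every remaining move is paid for with `48`
units of it. -/
def potential (E : Finset (Finset α)) : ℕ := 15 * #E + ∑ v, weight (degree E v)

theorem potential_le (E : Finset (Finset α)) : potential E ≤ 15 * (Fintype.card α + #E) := by
  have : ∑ v, weight (degree E v) ≤ Fintype.card α * 15 :=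
    sum_le_card_nsmul univ _ 15 fun v _ => weight_le _
  rw [potential]
  omega

theorem potential_residual_add_sum_le {g : α → ℕ}
    (hg : ∀ u, u ≠ v → weight (degree (residual E v) u) + g u ≤ weight (degree E u)) :
    potential (residual E v) + 15 * degree E v + weight (degree E v) + ∑ u ∈ univ.erase v, g u ≤
      potential E := by
  have hsum : ∑ u ∈ univ.erase v, weight (degree (residual E v) u) + ∑ u ∈ univ.erase v, g u ≤
      ∑ u ∈ univ.erase v, weight (degree E u) := by
    rw [← sum_add_distrib]
    exact sum_le_sum fun u hu => hg u (ne_of_mem_erase hu)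
  have hself : weight (degree (residual E v) v) = 0 := by rw [degree_residual_self, weight]
  have hcard := card_residual_add_degree E v
  rw [potential, potential, ← add_sum_erase univ _ (mem_univ v),
    ← add_sum_erase univ (fun u => weight (degree E u)) (mem_univ v)]
  omega

theorem potential_residual_add_le (hE : (E : Set (Finset α)).Sized 3) (hc : WeightSlope D c)
    (hD : ∀ e ∈ edgesAt E v, ∀ u ∈ e, degree E u ≤ D) :
    potential (residual E v) + (15 + 2 * c) * degree E v + weight (degree E v) ≤ potential E := by
  have hdrop := potential_residual_add_sum_le fun u (_ : u ≠ v) =>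
    hc.weight_degree_residual_add_le hD u
  rw [← mul_sum, sum_erase_degree_edgesAt hE] at hdrop
  linarith

theorem potential_residual_add_surplus_le (hE : (E : Set (Finset α)).Sized 3)
    (hc : WeightSlope D c) (hD : ∀ e ∈ edgesAt E v, ∀ u ∈ e, degree E u ≤ D) (hzv : z ≠ v)
    (hz : weight (degree (residual E v) z) + c * degree (edgesAt E v) z + x ≤
      weight (degree E z)) :
    potential (residual E v) + (15 + 2 * c) * degree E v + weight (degree E v) + x ≤
      potential E := by
  have hdrop := potential_residual_add_sum_le (E := E) (v := v)
    (g := fun u => c * degree (edgesAt E v) u + if u = z then x else 0) fun u _ => by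
      split_ifs with huz
      · rw [huz, ← add_assoc]
        exact hz
      · exact hc.weight_degree_residual_add_le hD u
  rw [sum_add_distrib, ← mul_sum, sum_erase_degree_edgesAt hE, sum_ite_eq' _ z,
    if_pos (mem_erase.2 ⟨hzv, mem_univ z⟩)] at hdrop
  linarith

theorem potential_residual_add_le_of_degree_pos (hE : (E : Set (Finset α)).Sized 3)
    (hc : WeightSlope D c) (hD : ∀ e ∈ edgesAt E v, ∀ u ∈ e, degree E u ≤ D)
    (hv : 0 < degree E v) : potential (residual E v) + (26 + 2 * c) ≤ potential E := by
  have hdrop := potential_residual_add_le hE hc hD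
  have hdeg : 15 + 2 * c ≤ (15 + 2 * c) * degree E v := Nat.le_mul_of_pos_right _ hv
  have := le_weight hv
  omega

theorem potential_reply_add_le {u : α} (hE : (E : Set (Finset α)).Sized 3) (hc : WeightSlope D c)
    (hmax : ∀ w, degree E w ≤ D) (hu : 0 < degree (residual E v) u) :
    potential (residual (residual E v) u) + (26 + 2 * c) ≤ potential (residual E v) :=
  potential_residual_add_le_of_degree_pos (sized_residual hE v) hc
    (fun _ _ w _ => (degree_mono (residual_subset E v) w).trans (hmax w)) hu

/-- The move takes away the whole weight `11` of `a`, where the slope only accounts for `c`. -/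
theorem potential_residual_add_le_of_leaf {e : Finset α} {a : α}
    (hE : (E : Set (Finset α)).Sized 3) (hc : WeightSlope D c) (hmax : ∀ u, degree E u ≤ D)
    (he : e ∈ E) (hae : a ∈ e) (ha : degree E a = 1) (hve : v ∈ e) (hav : a ≠ v)
    (hcx : c + x = 11) :
    potential (residual E v) + (15 + 2 * c) * degree E v + weight (degree E v) + x ≤
      potential E := by
  refine potential_residual_add_surplus_le hE hc (fun _ _ u _ => hmax u) hav ?_
  have hsplit := degree_residual_add_degree_edgesAt E v a
  have hpos := degree_pos_of_mem (mem_edgesAt.2 ⟨he, hve⟩) hae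
  obtain ⟨hres, hat⟩ : degree (residual E v) a = 0 ∧ degree (edgesAt E v) a = 1 := by omega
  rw [hres, hat, ha, mul_one, weight, weight]
  omega

/-- The vertex `u` loses the increments `3` and `1`, or only `3`, which is at least `2` more than
one unit for every lost edge. -/
theorem potential_residual_add_le_of_degree_residual_eq_one {u : α}
    (hE : (E : Set (Finset α)).Sized 3) (h3 : ∀ w, degree E w ≤ 3)
    (hres : degree (residual E v) u = 1) (hu : 1 < degree E u) :
    potential (residual E v) + 17 * degree E v + weight (degree E v) + 2 ≤ potential E := by
  have huv : u ≠ v := ne_of_degree_residual_pos (E := E) (by omega)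
  refine potential_residual_add_surplus_le hE weightSlope_three (fun _ _ w _ => h3 w) huv ?_
  have hsplit := degree_residual_add_degree_edgesAt E v u
  have hthree := h3 u
  rw [hres] at hsplit ⊢
  rw [← hsplit] at hu hthree ⊢
  generalize degree (edgesAt E v) u = k at hu hthree ⊢
  have : k ≤ 2 := by omega
  interval_cases k <;> simp [weight] at hu ⊢

/-- By uniformity, `Φ(E)` is the sum over all vertices of `5 d + weight d`, where `d` is the degree.
For `d ≤ 2` this summand is `0`, `16`, `24`, and the number of vertices of degree `1` is three times
the number of edges consisting of them. -/
theorem dvd_potential_of_unmixed (hE : (E : Set (Finset α)).Sized 3) (h2 : ∀ u, degree E u ≤ 2)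
    (hunmixed : ∀ e ∈ E, ∀ a ∈ e, degree E a = 1 → ∀ b ∈ e, degree E b = 1) :
    24 ∣ potential E := by
  let F : Finset (Finset α) := {e ∈ E | ∃ a ∈ e, degree E a = 1}
  have hF : (F : Set (Finset α)).Sized 3 := hE.mono (coe_subset.2 (filter_subset _ _))
  have hvertex : ∀ u, 24 ∣ 5 * degree E u + weight (degree E u) + 8 * degree F u := by
    intro u
    rw [degree_filter_of_unmixed hunmixed u]
    have := h2 u
    interval_cases degree E u <;> decide
  have hdvd : 24 ∣ 5 * (#E * 3) + ∑ u, weight (degree E u) + 8 * (#F * 3) := by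
    rw [← sum_degree_of_sized hE, ← sum_degree_of_sized hF, mul_sum, mul_sum,
      ← sum_add_distrib, ← sum_add_distrib]
    exact dvd_sum fun u _ => hvertex u
  rw [potential]
  omega

end Potential

section Game

variable {E : Finset (Finset V)} {v : V} {B C : ℕ}

theorem gameVal_true_le (hv : 0 < degree E v) :
    gameVal true E ≤ 1 + gameVal false (residual E v) := by
  have hmem : v ∈ playable E := by simpa [playable] using degree_pos_iff.1 hv
  rw [gameVal, dif_pos ⟨v, hmem⟩, if_pos rfl]
  gcongr
  exact inf'_le (fun w : {x // x ∈ playable E} => gameVal false (residual E w.1))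
    (mem_attach _ ⟨v, hmem⟩)

theorem gameVal_false_le
    (h : ∀ u, 0 < degree E u → 1 + gameVal true (residual E u) ≤ B) : gameVal false E ≤ B := by
  rw [gameVal]
  by_cases hne : (playable E).Nonempty
  · rw [dif_pos hne, if_neg Bool.false_ne_true]
    obtain ⟨⟨u, hu⟩, -, hval⟩ := exists_mem_eq_sup' (attach_nonempty_iff.2 hne)
      (fun w : {x // x ∈ playable E} => gameVal true (residual E w.1))
    have hdeg : 0 < degree E u := degree_pos_iff.2 (by simpa [playable] using hu)
    exact (congrArg (1 + ·) hval).trans_le (h u hdeg)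
  · rw [dif_neg hne]
    exact B.zero_le

theorem gameVal_true_eq_zero (h : ∀ v, degree E v = 0) : gameVal true E = 0 := by
  rw [gameVal, dif_neg]
  rintro ⟨v, hv⟩
  exact (degree_pos_iff.2 (by simpa [playable] using hv)).ne' (h v)

theorem gameVal_true_le_of_round (ih : ∀ F ⊂ E, 48 * gameVal true F ≤ potential F)
    (hv : 0 < degree E v) (hC : 48 ≤ C)
    (hround : ∀ u, 0 < degree (residual E v) u →
      potential (residual (residual E v) u) + 96 ≤ C) :
    48 * gameVal true E ≤ C := by
  have hreply : gameVal false (residual E v) ≤ C / 48 - 1 := gameVal_false_le fun u hu => by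
    have := ih _ ((residual_subset _ u).trans_ssubset (residual_ssubset hv))
    have := hround u hu
    omega
  have := gameVal_true_le hv
  omega

section EdgeHitterMove

variable {e : Finset V} {a : V} (hE : (E : Set (Finset V)).Sized 3)
  (ih : ∀ F ⊂ E, 48 * gameVal true F ≤ potential F)
include hE ih

theorem gameVal_le_potential_of_four_le_degree (hv : 4 ≤ degree E v) :
    48 * gameVal true E ≤ potential E := by
  have hmax : ∀ u, degree E u ≤ #E := fun u => card_le_card (edgesAt_subset E u)
  have hmove := potential_residual_add_le hE (weightSlope_zero #E) (v := v) fun _ _ u _ => hmax u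
  rw [weight_of_three_le (by omega)] at hmove
  refine gameVal_true_le_of_round ih (v := v) (by omega) (by omega) fun u hu => ?_
  have hreply := potential_reply_add_le hE (weightSlope_zero #E) hmax hu
  omega

theorem gameVal_le_potential_of_leaf_of_degree_eq_three (h3 : ∀ u, degree E u ≤ 3)
    (he : e ∈ E) (hae : a ∈ e) (ha : degree E a = 1) (hve : v ∈ e) (hv : degree E v = 3) :
    48 * gameVal true E ≤ potential E := by
  have hmove := potential_residual_add_le_of_leaf hE weightSlope_three h3 he hae ha hve
    (ne_of_apply_ne (degree E) (by omega)) (x := 10) rfl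
  rw [weight_of_three_le hv.ge, hv] at hmove
  refine gameVal_true_le_of_round ih (v := v) (by omega) (by omega) fun u hu => ?_
  have hreply := potential_reply_add_le hE weightSlope_three h3 hu
  omega

theorem gameVal_le_potential_of_degree_eq_three (h3 : ∀ u, degree E u ≤ 3)
    (hleaf : ∀ e ∈ E, ∀ a ∈ e, degree E a = 1 → ∀ b ∈ e, degree E b ≠ 3)
    (hv : degree E v = 3) : 48 * gameVal true E ≤ potential E := by
  have hmove := potential_residual_add_le hE weightSlope_three (v := v) fun _ _ u _ => h3 u
  rw [weight_of_three_le hv.ge, hv] at hmove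
  refine gameVal_true_le_of_round ih (v := v) (by omega) (by omega) fun u hu => ?_
  have hF := sized_residual hE v
  by_cases hFu : 1 < degree (residual E v) u
  · have hreply := potential_residual_add_le hF weightSlope_three (v := u) fun _ _ w _ =>
      (degree_mono (residual_subset E v) w).trans (h3 w)
    have := le_weight hu
    omega
  have hFu : degree (residual E v) u = 1 := by omega
  -- If `u` lost edges to the move, then the move lowers `Φ` by `68` and the reply by `28`;
  -- otherwise all neighbours of `u` have degree at most `2`, and the drops are `66` and `32`.
  by_cases hEu : 1 < degree E u
  · have hsurplus := potential_residual_add_le_of_degree_residual_eq_one hE h3 hFu hEu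
    have hreply := potential_reply_add_le hE weightSlope_three h3 hu
    rw [weight_of_three_le hv.ge, hv] at hsurplus
    omega
  · have hEu : degree E u = 1 :=
      le_antisymm (not_lt.1 hEu) (hFu.ge.trans (degree_mono (residual_subset E v) u))
    have hreply := potential_residual_add_le_of_degree_pos hF weightSlope_two
      (fun e he w hw => by
        obtain ⟨heF, hue⟩ := mem_edgesAt.1 he
        have := hleaf e (residual_subset E v heF) u hue hEu w hw
        have := h3 w
        have := degree_mono (residual_subset E v) w
        omega) hu
    omega

theorem gameVal_le_potential_of_leaf_of_degree_eq_two (h2 : ∀ u, degree E u ≤ 2)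
    (he : e ∈ E) (hae : a ∈ e) (ha : degree E a = 1) (hve : v ∈ e) (hv : degree E v = 2) :
    48 * gameVal true E ≤ potential E := by
  have hmove := potential_residual_add_le_of_leaf hE weightSlope_two h2 he hae ha hve
    (ne_of_apply_ne (degree E) (by omega)) (x := 8) rfl
  rw [hv, weight] at hmove
  refine gameVal_true_le_of_round ih (v := v) (by omega) (by omega) fun u hu => ?_
  have hreply := potential_reply_add_le hE weightSlope_two h2 hu
  omega

theorem gameVal_le_potential_of_degree_eq_two (h2 : ∀ u, degree E u ≤ 2)
    (hunmixed : ∀ e ∈ E, ∀ a ∈ e, degree E a = 1 → ∀ b ∈ e, degree E b = 1)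
    (hv : degree E v = 2) : 48 * gameVal true E ≤ potential E := by
  have hmove := potential_residual_add_le hE weightSlope_two (v := v) fun _ _ u _ => h2 u
  rw [hv, weight] at hmove
  have hval : 48 * gameVal true E ≤ potential E + 8 :=
    gameVal_true_le_of_round ih (v := v) (by omega) (by omega) fun u hu => by
      have hreply := potential_reply_add_le hE weightSlope_two h2 hu
      omega
  have hdvd := dvd_potential_of_unmixed hE h2 hunmixed
  omega

theorem gameVal_le_potential_of_degree_le_one (h1 : ∀ u, degree E u ≤ 1) (hv : 0 < degree E v) :
    48 * gameVal true E ≤ potential E := by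
  have hmove := potential_residual_add_le_of_degree_pos hE weightSlope_one
    (fun _ _ u _ => h1 u) hv
  refine gameVal_true_le_of_round ih hv (by omega) fun u hu => ?_
  have hreply := potential_reply_add_le hE weightSlope_one h1 hu
  omega

theorem gameVal_le_potential_of_degree_le_two (h2 : ∀ u, degree E u ≤ 2) :
    48 * gameVal true E ≤ potential E := by
  by_cases hleaf : ∃ e ∈ E, ∃ a ∈ e, degree E a = 1 ∧ ∃ v ∈ e, degree E v = 2
  · obtain ⟨e, he, a, hae, ha, v, hve, hv⟩ := hleaf
    exact gameVal_le_potential_of_leaf_of_degree_eq_two hE ih h2 he hae ha hve hv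
  by_cases htwo : ∃ v, degree E v = 2
  · obtain ⟨v, hv⟩ := htwo
    refine gameVal_le_potential_of_degree_eq_two hE ih h2 (fun e he a hae ha b hbe => ?_) hv
    have hb : degree E b ≠ 2 := fun hb => hleaf ⟨e, he, a, hae, ha, b, hbe, hb⟩
    have := h2 b
    have := degree_pos_of_mem he hbe
    omega
  have h1 : ∀ u, degree E u ≤ 1 := fun u =>
    Nat.le_of_lt_succ ((h2 u).lt_of_ne fun hu => htwo ⟨u, hu⟩)
  by_cases hpos : ∃ v, 0 < degree E v
  · obtain ⟨v, hv⟩ := hpos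
    exact gameVal_le_potential_of_degree_le_one hE ih h1 hv
  · simp only [not_exists, Nat.pos_iff_ne_zero, not_not] at hpos
    simp [gameVal_true_eq_zero hpos]

theorem gameVal_le_potential_of_degree_le_three (h3 : ∀ u, degree E u ≤ 3) :
    48 * gameVal true E ≤ potential E := by
  by_cases hleaf : ∃ e ∈ E, ∃ a ∈ e, degree E a = 1 ∧ ∃ v ∈ e, degree E v = 3
  · obtain ⟨e, he, a, hae, ha, v, hve, hv⟩ := hleaf
    exact gameVal_le_potential_of_leaf_of_degree_eq_three hE ih h3 he hae ha hve hv
  by_cases hthree : ∃ v, degree E v = 3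
  · obtain ⟨v, hv⟩ := hthree
    exact gameVal_le_potential_of_degree_eq_three hE ih h3
      (fun e he a hae ha b hbe hb => hleaf ⟨e, he, a, hae, ha, b, hbe, hb⟩) hv
  exact gameVal_le_potential_of_degree_le_two hE ih fun u =>
    Nat.le_of_lt_succ ((h3 u).lt_of_ne fun hu => hthree ⟨u, hu⟩)

end EdgeHitterMove

theorem gameVal_le_potential (hE : (E : Set (Finset V)).Sized 3) :
    48 * gameVal true E ≤ potential E := by
  induction E using Finset.strongInduction with
  | H E ih =>
    have ih' : ∀ F ⊂ E, 48 * gameVal true F ≤ potential F := fun F hF =>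
      ih F hF (hE.mono (coe_subset.2 hF.subset))
    by_cases hfour : ∃ v, 4 ≤ degree E v
    · obtain ⟨v, hv⟩ := hfour
      exact gameVal_le_potential_of_four_le_degree hE ih' hv
    · exact gameVal_le_potential_of_degree_le_three hE ih' fun u =>
        Nat.le_of_lt_succ (not_le.1 fun hu => hfour ⟨u, hu⟩)

end Game

end TransversalGame

/-- If `H` is a `3`-uniform hypergraph, then `τ_g(H) ≤ (5/16)(n(H) + m(H))`. -/
theorem gameTransversalNum_le_of_three_uniform
    {V : Type} [Fintype V] [DecidableEq V] (E : Finset (Finset V))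
    (h3 : ∀ e ∈ E, e.card = 3) :
    (gameTransversalNum E : ℚ) ≤ (5 / 16) * (Fintype.card V + E.card) := by
  have hτ : (48 * gameTransversalNum E : ℚ) ≤ 15 * (Fintype.card V + E.card) := by
    exact_mod_cast (TransversalGame.gameVal_le_potential fun e he => h3 e he).trans
      (TransversalGame.potential_le E)
  linarith
end
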